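/- arXiv:1312.6607 — 5 statements merged into one kernel-verified Lean document; each statement's English description precedes it below -/
import Mathlib

section
/- Let μ be a probability measure on ℝ and let Λ : ℝ → ℝ be a monotone nondecreasing function with 0 ≤ Λ(t) ≤ 1 for all t. Then for every x ∈ ℝ, ∫_{(-∞,x]} Λ dμ ≤ μ((-∞,x]) · ∫_ℝ Λ dμ. -/
open MeasureTheory

/-! If every value of `f` on `s` is at most every value on `sᶜ`, integrating `f a ≤ f b` over
`(a, b) ∈ s × sᶜ` gives `μ(sᶜ) ∫_s f ≤ μ(s) ∫_{sᶜ} f`. For a probability measure, adding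
`μ(s) ∫_s f` to both sides turns this into `∫_s f ≤ μ(s) ∫ f`. -/

section SeparatedValues

variable {α : Type*} [MeasurableSpace α] {μ : Measure α} {f : α → ℝ} {s t : Set α}

theorem measureReal_mul_setIntegral_le_of_forall_le
    (hs : MeasurableSet s) (ht : MeasurableSet t) (hμs : μ s ≠ ⊤) (hμt : μ t ≠ ⊤)
    (hfs : IntegrableOn f s μ) (hft : IntegrableOn f t μ)
    (hle : ∀ a ∈ s, ∀ b ∈ t, f a ≤ f b) :
    μ.real t * ∫ a in s, f a ∂μ ≤ μ.real s * ∫ b in t, f b ∂μ := by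
  have const_le_integral : ∀ a ∈ s, μ.real t * f a ≤ ∫ b in t, f b ∂μ := fun a ha =>
    calc μ.real t * f a = ∫ _ in t, f a ∂μ := by rw [setIntegral_const, smul_eq_mul]
      _ ≤ ∫ b in t, f b ∂μ := setIntegral_mono_on (integrableOn_const hμt) hft ht (hle a ha)
  calc μ.real t * ∫ a in s, f a ∂μ = ∫ a in s, μ.real t * f a ∂μ :=
        (integral_const_mul _ _).symm
    _ ≤ ∫ _ in s, (∫ b in t, f b ∂μ) ∂μ :=
        setIntegral_mono_on (hfs.const_mul _) (integrableOn_const hμs) hs const_le_integral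
    _ = μ.real s * ∫ b in t, f b ∂μ := by rw [setIntegral_const, smul_eq_mul]

theorem setIntegral_le_measureReal_mul_integral_of_forall_le_compl [IsProbabilityMeasure μ]
    (hs : MeasurableSet s) (hf : Integrable f μ) (hle : ∀ a ∈ s, ∀ b ∈ sᶜ, f a ≤ f b) :
    ∫ a in s, f a ∂μ ≤ μ.real s * ∫ a, f a ∂μ := by
  have mul_setIntegral_le_compl : μ.real sᶜ * ∫ a in s, f a ∂μ ≤ μ.real s * ∫ b in sᶜ, f b ∂μ :=
    measureReal_mul_setIntegral_le_of_forall_le hs hs.compl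
      (measure_ne_top μ s) (measure_ne_top μ sᶜ) hf.integrableOn hf.integrableOn hle
  calc ∫ a in s, f a ∂μ
      = μ.real s * ∫ a in s, f a ∂μ + μ.real sᶜ * ∫ a in s, f a ∂μ := by
        rw [← add_mul, probReal_add_probReal_compl hs, one_mul]
    _ ≤ μ.real s * ∫ a in s, f a ∂μ + μ.real s * ∫ b in sᶜ, f b ∂μ := by gcongr
    _ = μ.real s * ∫ a, f a ∂μ := by rw [← mul_add, integral_add_compl hs hf]

end SeparatedValues

theorem stmt_0_general {α : Type*} [LinearOrder α] [MeasurableSpace α]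
    {μ : Measure α} [IsProbabilityMeasure μ] {Λ : α → ℝ} (hmono : Monotone Λ)
    (hint : Integrable Λ μ) {s : Set α} (hlower : IsLowerSet s) (hs : MeasurableSet s) :
    ∫ t in s, Λ t ∂μ ≤ μ.real s * ∫ t, Λ t ∂μ :=
  setIntegral_le_measureReal_mul_integral_of_forall_le_compl hs hint fun _ ha _ hb =>
    hmono (le_of_not_ge fun hba => hb (hlower hba ha))

/-- For a probability measure `μ` on `ℝ` and a monotone nondecreasing `Λ : ℝ → ℝ` with
`0 ≤ Λ ≤ 1`, one has `∫_{(-∞,x]} Λ dμ ≤ μ((-∞,x]) · ∫ Λ dμ` for every `x`. -/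
theorem stmt_0 (μ : Measure ℝ) [IsProbabilityMeasure μ]
    (Λ : ℝ → ℝ) (hmono : Monotone Λ)
    (hbound : ∀ t : ℝ, 0 ≤ Λ t ∧ Λ t ≤ 1) :
    ∀ x : ℝ, ∫ t in Set.Iic x, Λ t ∂μ ≤ (μ (Set.Iic x)).toReal * ∫ t, Λ t ∂μ :=
  have hint : Integrable Λ μ := .of_mem_Icc 0 1 hmono.measurable.aemeasurable (.of_forall hbound)
  fun x => stmt_0_general hmono hint (isLowerSet_Iic x) measurableSet_Iic
end

section
/- Let 𝒫 be a probability measure on ℝ × ℝ with first and second marginals μ₁ and μ₂. Let p be a probability vector on {0,1}×{0,1} with marginals p₁, p₂ satisfying 0 < p₁(1) < 1 and 0 < p₂(1) < 1, and let Λ₁, Λ₂ : ℝ → [0,1] be measurable functions with ∫ Λ₁ dμ₁ = p₁(1) and ∫ Λ₂ dμ₂ = p₂(1). Define ν₁¹ = (Λ₁/p₁(1))·μ₁, ν₁⁰ = ((1−Λ₁)/p₁(0))·μ₁ and similarly ν₂¹, ν₂⁰, and let P = Σ_{s,t ∈ {0,1}} p(s,t) · (ν₁ˢ ⊗ ν₂ᵗ)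 be the latent-Ising pairwise model. Then KL(𝒫 ‖ P) ≥ KL(𝒫 ‖ μ₁ ⊗ μ₂) − log 2. In particular, if the mutual information I_𝒫(X₁,X₂) = KL(𝒫 ‖ μ₁ ⊗ μ₂) is strictly greater than log 2, then KL(𝒫 ‖ P) > 0, i.e., the latent binary model cannot perfectly encode the joint distribution of (X₁, X₂) for any choice of encoding functions. -/
open MeasureTheory Classical

/-- Kullback–Leibler divergence. -/
noncomputable def klDiv {α : Type*} [MeasurableSpace α] (ν ρ : Measure α) : EReal :=
  if ν ≪ ρ ∧ Integrable (llr ν ρ) ν then ((∫ x, llr ν ρ x ∂ν : ℝ) : EReal) else ⊤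

/-!
The model `P` has a density `F` with respect to `μ₁ ⊗ μ₂`, and by Jensen's inequality passing from
`P` to `μ₁ ⊗ μ₂` raises the Kullback–Leibler divergence of `𝒫` by `∫ log F d𝒫 ≤ log (∫ F d𝒫)`.
The conditional density of `X₁` given `σ₁ = s` has the form `Λ₁ s / p₁ s`. Bounding `p s t` by
`p₁ s` cancels this denominator, and since `∑ₛ Λ₁ s = 1` there remains
`F (x, y) ≤ ∑ₜ Λ₂ t y / p₂ t`. This is a function of `y` alone, so its `𝒫`-mean depends only on
`μ₂`: it is a sum of integrals of probability densities, one for each state of `σ₂`. Exchanging the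
two variables bounds `∫ F d𝒫` by the number of states of `σ₁` as well.
-/

open scoped ENNReal

lemma withDensity_finsetSum {α ι : Type*} [MeasurableSpace α] (μ : Measure α) (s : Finset ι)
    {f : ι → α → ℝ≥0∞} (hf : ∀ i ∈ s, Measurable (f i)) :
    μ.withDensity (fun x => ∑ i ∈ s, f i x) = ∑ i ∈ s, μ.withDensity (f i) := by
  ext A hA
  simp only [withDensity_apply _ hA, Measure.finsetSum_apply]
  exact lintegral_finsetSum s hf

section LogLikelihood

variable {α : Type*} [MeasurableSpace α] {μ ν ρ : Measure α}

lemma one_sub_rnDeriv_le_llr [SigmaFinite μ] [SigmaFinite ν] (hμν : μ ≪ ν) :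
    ∀ᵐ x ∂μ, 1 - (ν.rnDeriv μ x).toReal ≤ llr μ ν x := by
  filter_upwards [exp_neg_llr hμν] with x hx
  linarith [Real.add_one_le_exp (-llr μ ν x)]

lemma llr_ae_eq_add [SigmaFinite μ] [SigmaFinite ν] [SigmaFinite ρ] (hμν : μ ≪ ν) (hνρ : ν ≪ ρ) :
    llr μ ρ =ᵐ[μ] llr μ ν + llr ν ρ := by
  filter_upwards [hμν.ae_le (Measure.rnDeriv_mul_rnDeriv' (μ := μ) hνρ),
    Measure.rnDeriv_pos hμν, hμν.ae_le (Measure.rnDeriv_ne_top μ ν),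
    hμν.ae_le (Measure.rnDeriv_pos hνρ), (hμν.trans hνρ).ae_le (Measure.rnDeriv_ne_top ν ρ)]
    with x hmul hμν_pos hμν_top hνρ_pos hνρ_top
  rw [Pi.add_apply, llr, llr, llr, ← hmul, Pi.mul_apply, ENNReal.toReal_mul,
    Real.log_mul (ENNReal.toReal_pos hμν_pos.ne' hμν_top).ne'
      (ENNReal.toReal_pos hνρ_pos.ne' hνρ_top).ne']

variable {F : α → ℝ≥0∞}

/- The tangent line of `log` at `c` stands in for Jensen's inequality: besides the bound on the
mean, it gives the integrable upper bound from which integrability of `llr μ ρ` follows. -/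
lemma llr_le_llr_withDensity_add [SigmaFinite μ] [SigmaFinite ρ] [SigmaFinite (ρ.withDensity F)]
    (hF : AEMeasurable F ρ) (hμ : μ ≪ ρ.withDensity F) {c : ℝ} (hc : 0 < c) :
    ∀ᵐ x ∂μ, llr μ ρ x ≤ llr μ (ρ.withDensity F) x + (Real.log c - 1 + (F x).toReal / c) := by
  have hρ : ρ.withDensity F ≪ ρ := withDensity_absolutelyContinuous ρ F
  filter_upwards [llr_ae_eq_add hμ hρ, hμ.ae_le (Measure.rnDeriv_pos hρ),
    (hμ.trans hρ).ae_le (Measure.rnDeriv_ne_top (ρ.withDensity F) ρ),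
    (hμ.trans hρ).ae_le (Measure.rnDeriv_withDensity₀ ρ hF)] with x hadd hpos htop hdensity
  rw [hdensity] at hpos htop
  have hFx : 0 < (F x).toReal := ENNReal.toReal_pos hpos.ne' htop
  have hlog := Real.log_le_sub_one_of_pos (div_pos hFx hc)
  rw [Real.log_div hFx.ne' hc.ne'] at hlog
  have hllr : llr (ρ.withDensity F) ρ x = Real.log (F x).toReal := by rw [llr, hdensity]
  rw [hadd, Pi.add_apply, hllr]
  linarith

theorem klDiv_sub_log_le_klDiv_withDensity [IsProbabilityMeasure μ] [IsFiniteMeasure ρ]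
    [SigmaFinite (ρ.withDensity F)] (hF : AEMeasurable F ρ) {c : ℝ} (hc : 0 < c)
    (hFc : ∫⁻ x, F x ∂μ ≤ ENNReal.ofReal c) :
    klDiv μ ρ - (Real.log c : EReal) ≤ klDiv μ (ρ.withDensity F) := by
  by_cases h : μ ≪ ρ.withDensity F ∧ Integrable (llr μ (ρ.withDensity F)) μ
  swap
  · simp [klDiv, h]
  obtain ⟨hμ, hint⟩ := h
  have hμρ : μ ≪ ρ := hμ.trans (withDensity_absolutelyContinuous ρ F)
  have hFμ : AEMeasurable F μ := hF.mono_ac hμρ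
  have hF_top : ∫⁻ x, F x ∂μ ≠ ∞ := ne_top_of_le_ne_top ENNReal.ofReal_ne_top hFc
  have hF_int : Integrable (fun x => (F x).toReal) μ :=
    integrable_toReal_of_lintegral_ne_top hFμ hF_top
  have hF_mean : ∫ x, (F x).toReal ∂μ ≤ c := by
    rw [integral_toReal hFμ (ae_lt_top' hFμ hF_top)]
    exact ENNReal.toReal_le_of_le_ofReal hc.le hFc
  have htangent_int : Integrable (fun x => Real.log c - 1 + (F x).toReal / c) μ :=
    (integrable_const _).add (hF_int.div_const c)
  have htangent_mean : ∫ x, (Real.log c - 1 + (F x).toReal / c) ∂μ ≤ Real.log c := by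
    rw [integral_add (integrable_const _) (hF_int.div_const c), integral_const, integral_div,
      probReal_univ, one_smul]
    linarith [(div_le_one hc).mpr hF_mean]
  have hupper := llr_le_llr_withDensity_add hF hμ hc
  have hint_ρ : Integrable (llr μ ρ) μ :=
    integrable_of_le_of_le (measurable_llr μ ρ).aestronglyMeasurable
      (one_sub_rnDeriv_le_llr hμρ) hupper
      ((integrable_const 1).sub Measure.integrable_toReal_rnDeriv) (hint.add htangent_int)
  have hmean := integral_mono_ae hint_ρ (hint.add htangent_int) hupper
  rw [integral_add' hint htangent_int] at hmean
  rw [klDiv, klDiv, if_pos ⟨hμρ, hint_ρ⟩, if_pos ⟨hμ, hint⟩, ← EReal.coe_sub,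
    EReal.coe_le_coe_iff]
  linarith

end LogLikelihood

section LatentModel

variable {α β S T : Type*} [MeasurableSpace α] [MeasurableSpace β]

/-- A stochastic encoding of an observed variable by a latent variable with finitely many states:
`Λ s x` is the probability that the latent variable is in state `s` when `x` is observed. -/
structure IsEncoding [Fintype S] (Λ : S → α → ℝ≥0∞) : Prop where
  measurable : ∀ s, Measurable (Λ s)
  sum_eq_one : ∀ x, ∑ s, Λ s x = 1

/-- The density, with respect to the law `μ` of an observed variable, of its conditional law given
a latent state; `Λ x` is the probability of that state when `x` is observed, so the denominator is
the total probability of the state. -/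
noncomputable def condDensity (μ : Measure α) (Λ : α → ℝ≥0∞) (x : α) : ℝ≥0∞ :=
  Λ x / ∫⁻ y, Λ y ∂μ

/-- The latent pairwise model: the latent pair has joint weights `p`, and the observed variables
are conditionally independent given it, with the conditional laws derived from the encodings `Λ₁`
and `Λ₂` of `μ₁` and `μ₂`. -/
noncomputable def latentModel [Fintype S] [Fintype T] (μ₁ : Measure α) (μ₂ : Measure β)
    (Λ₁ : S → α → ℝ≥0∞) (Λ₂ : T → β → ℝ≥0∞) (p : S → T → ℝ≥0∞) : Measure (α × β) :=
  ∑ s, ∑ t, p s t •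
    (μ₁.withDensity (condDensity μ₁ (Λ₁ s))).prod (μ₂.withDensity (condDensity μ₂ (Λ₂ t)))

/-- The density of the latent pairwise model with respect to `μ₁ ⊗ μ₂`. -/
noncomputable def latentDensity [Fintype S] [Fintype T] (μ₁ : Measure α) (μ₂ : Measure β)
    (Λ₁ : S → α → ℝ≥0∞) (Λ₂ : T → β → ℝ≥0∞) (p : S → T → ℝ≥0∞) (z : α × β) : ℝ≥0∞ :=
  ∑ s, ∑ t, p s t * (condDensity μ₁ (Λ₁ s) z.1 * condDensity μ₂ (Λ₂ t) z.2)

lemma IsEncoding.nonempty [Fintype S] [Nonempty α] {Λ : S → α → ℝ≥0∞} (hΛ : IsEncoding Λ) :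
    Nonempty S := by
  obtain ⟨x⟩ := ‹Nonempty α›
  have hsum : ∑ s, Λ s x ≠ 0 := by simp only [hΛ.sum_eq_one, ne_eq, one_ne_zero, not_false_eq_true]
  exact Finset.univ_nonempty_iff.mp (Finset.nonempty_of_sum_ne_zero hsum)

lemma measurable_condDensity {μ : Measure α} {Λ : α → ℝ≥0∞} (hΛ : Measurable Λ) :
    Measurable (condDensity μ Λ) :=
  hΛ.div_const _

lemma lintegral_condDensity_le_one {μ : Measure α} {Λ : α → ℝ≥0∞} (hΛ : Measurable Λ) :
    ∫⁻ x, condDensity μ Λ x ∂μ ≤ 1 := by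
  simp only [condDensity, div_eq_mul_inv]
  rw [lintegral_mul_const _ hΛ]
  exact ENNReal.mul_inv_le_one _

lemma IsEncoding.lintegral_sum_condDensity_le_card [Fintype S] {μ : Measure α} {Λ : S → α → ℝ≥0∞}
    (hΛ : IsEncoding Λ) : ∫⁻ x, ∑ s, condDensity μ (Λ s) x ∂μ ≤ Fintype.card S := by
  rw [lintegral_finsetSum _ fun s _ => measurable_condDensity (hΛ.measurable s)]
  calc ∑ s, ∫⁻ x, condDensity μ (Λ s) x ∂μ
      ≤ ∑ _s : S, 1 := Finset.sum_le_sum fun s _ => lintegral_condDensity_le_one (hΛ.measurable s)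
    _ = Fintype.card S := by simp

variable [Fintype S] [Fintype T] {μ₁ : Measure α} {μ₂ : Measure β} {Λ₁ : S → α → ℝ≥0∞}
  {Λ₂ : T → β → ℝ≥0∞} {p : S → T → ℝ≥0∞}

lemma measurable_latentDensity (hΛ₁ : IsEncoding Λ₁) (hΛ₂ : IsEncoding Λ₂) :
    Measurable (latentDensity μ₁ μ₂ Λ₁ Λ₂ p) := by
  have h₁ := fun s => measurable_condDensity (μ := μ₁) (hΛ₁.measurable s)
  have h₂ := fun t => measurable_condDensity (μ := μ₂) (hΛ₂.measurable t)
  unfold latentDensity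
  fun_prop

lemma latentModel_eq_withDensity [SFinite μ₁] [SFinite μ₂] (hΛ₁ : IsEncoding Λ₁)
    (hΛ₂ : IsEncoding Λ₂) :
    latentModel μ₁ μ₂ Λ₁ Λ₂ p = (μ₁.prod μ₂).withDensity (latentDensity μ₁ μ₂ Λ₁ Λ₂ p) := by
  have h₁ := fun s => measurable_condDensity (μ := μ₁) (hΛ₁.measurable s)
  have h₂ := fun t => measurable_condDensity (μ := μ₂) (hΛ₂.measurable t)
  unfold latentModel latentDensity
  rw [withDensity_finsetSum _ _ fun _ _ => by fun_prop]
  refine Finset.sum_congr rfl fun s _ => ?_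
  rw [withDensity_finsetSum _ _ fun _ _ => by fun_prop]
  refine Finset.sum_congr rfl fun t _ => ?_
  rw [prod_withDensity (h₁ s) (h₂ t), ← withDensity_smul _ (by fun_prop)]
  rfl

lemma latentDensity_swap (z : α × β) :
    latentDensity μ₂ μ₁ Λ₂ Λ₁ (flip p) z.swap = latentDensity μ₁ μ₂ Λ₁ Λ₂ p z := by
  simp only [latentDensity, flip, Prod.fst_swap, Prod.snd_swap]
  rw [Finset.sum_comm]
  simp only [mul_comm (condDensity μ₂ _ _)]

lemma latentDensity_le_sum_snd (hΛ₁ : IsEncoding Λ₁)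
    (hp₁ : ∀ s, ∑ t, p s t = ∫⁻ x, Λ₁ s x ∂μ₁) (z : α × β) :
    latentDensity μ₁ μ₂ Λ₁ Λ₂ p z ≤ ∑ t, condDensity μ₂ (Λ₂ t) z.2 := by
  have hp_le (s t) : p s t ≤ ∫⁻ x, Λ₁ s x ∂μ₁ :=
    hp₁ s ▸ Finset.single_le_sum (fun _ _ => zero_le) (Finset.mem_univ t)
  have hcancel (s t) : p s t * condDensity μ₁ (Λ₁ s) z.1 ≤ Λ₁ s z.1 :=
    (mul_le_mul_left (hp_le s t) _).trans ENNReal.mul_div_le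
  calc latentDensity μ₁ μ₂ Λ₁ Λ₂ p z
      ≤ ∑ s, ∑ t, Λ₁ s z.1 * condDensity μ₂ (Λ₂ t) z.2 := by
        unfold latentDensity
        simp only [← mul_assoc]
        gcongr with s _ t
        exact hcancel s t
    _ = ∑ t, condDensity μ₂ (Λ₂ t) z.2 := by
        rw [← Finset.sum_mul_sum, hΛ₁.sum_eq_one, one_mul]

lemma latentDensity_le_sum_fst (hΛ₂ : IsEncoding Λ₂)
    (hp₂ : ∀ t, ∑ s, p s t = ∫⁻ y, Λ₂ t y ∂μ₂) (z : α × β) :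
    latentDensity μ₁ μ₂ Λ₁ Λ₂ p z ≤ ∑ s, condDensity μ₁ (Λ₁ s) z.1 :=
  (latentDensity_swap z).symm.trans_le (latentDensity_le_sum_snd hΛ₂ hp₂ z.swap)

lemma lintegral_latentDensity_le_min_card {ρ : Measure (α × β)} (hfst : ρ.fst = μ₁)
    (hsnd : ρ.snd = μ₂) (hΛ₁ : IsEncoding Λ₁) (hΛ₂ : IsEncoding Λ₂)
    (hp₁ : ∀ s, ∑ t, p s t = ∫⁻ x, Λ₁ s x ∂μ₁) (hp₂ : ∀ t, ∑ s, p s t = ∫⁻ y, Λ₂ t y ∂μ₂) :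
    ∫⁻ z, latentDensity μ₁ μ₂ Λ₁ Λ₂ p z ∂ρ ≤ (min (Fintype.card S) (Fintype.card T) : ℕ) := by
  have h₁ := fun s => measurable_condDensity (μ := μ₁) (hΛ₁.measurable s)
  have h₂ := fun t => measurable_condDensity (μ := μ₂) (hΛ₂.measurable t)
  rw [Nat.mono_cast.map_min]
  refine le_min ?_ ?_
  · calc ∫⁻ z, latentDensity μ₁ μ₂ Λ₁ Λ₂ p z ∂ρ
        ≤ ∫⁻ z, ∑ s, condDensity μ₁ (Λ₁ s) z.1 ∂ρ :=
          lintegral_mono (latentDensity_le_sum_fst hΛ₂ hp₂)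
      _ = ∫⁻ x, ∑ s, condDensity μ₁ (Λ₁ s) x ∂μ₁ := by
          rw [← hfst] at h₁ ⊢
          exact (lintegral_map (Finset.measurable_fun_sum _ fun s _ => h₁ s) measurable_fst).symm
      _ ≤ Fintype.card S := hΛ₁.lintegral_sum_condDensity_le_card
  · calc ∫⁻ z, latentDensity μ₁ μ₂ Λ₁ Λ₂ p z ∂ρ
        ≤ ∫⁻ z, ∑ t, condDensity μ₂ (Λ₂ t) z.2 ∂ρ :=
          lintegral_mono (latentDensity_le_sum_snd hΛ₁ hp₁)
      _ = ∫⁻ y, ∑ t, condDensity μ₂ (Λ₂ t) y ∂μ₂ := by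
          rw [← hsnd] at h₂ ⊢
          exact (lintegral_map (Finset.measurable_fun_sum _ fun t _ => h₂ t) measurable_snd).symm
      _ ≤ Fintype.card T := hΛ₂.lintegral_sum_condDensity_le_card

theorem stmt_9_general (P₀ : Measure (α × β)) [IsProbabilityMeasure P₀]
    (hΛ₁ : IsEncoding Λ₁) (hΛ₂ : IsEncoding Λ₂)
    (hp₁ : ∀ s, ∑ t, p s t = ∫⁻ x, Λ₁ s x ∂P₀.fst)
    (hp₂ : ∀ t, ∑ s, p s t = ∫⁻ y, Λ₂ t y ∂P₀.snd) :
    klDiv P₀ (P₀.fst.prod P₀.snd) -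
        (Real.log (min (Fintype.card S) (Fintype.card T) : ℕ) : EReal) ≤
          klDiv P₀ (latentModel P₀.fst P₀.snd Λ₁ Λ₂ p) ∧
      ((Real.log (min (Fintype.card S) (Fintype.card T) : ℕ) : EReal) <
          klDiv P₀ (P₀.fst.prod P₀.snd) →
        0 < klDiv P₀ (latentModel P₀.fst P₀.snd Λ₁ Λ₂ p)) := by
  have : Nonempty α := P₀.fst.nonempty_of_neZero
  have : Nonempty β := P₀.snd.nonempty_of_neZero
  have : Nonempty S := hΛ₁.nonempty
  have : Nonempty T := hΛ₂.nonempty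
  have hcard : (0 : ℝ) < (min (Fintype.card S) (Fintype.card T) : ℕ) :=
    Nat.cast_pos.mpr (lt_min Fintype.card_pos Fintype.card_pos)
  have hprod := lintegral_latentDensity_le_min_card (ρ := P₀.fst.prod P₀.snd)
    Measure.fst_prod Measure.snd_prod hΛ₁ hΛ₂ hp₁ hp₂
  have := isFiniteMeasure_withDensity (ne_top_of_le_ne_top (ENNReal.natCast_ne_top _) hprod)
  have hP₀ := lintegral_latentDensity_le_min_card rfl rfl hΛ₁ hΛ₂ hp₁ hp₂
  rw [latentModel_eq_withDensity hΛ₁ hΛ₂]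
  have hkl := klDiv_sub_log_le_klDiv_withDensity (ρ := P₀.fst.prod P₀.snd)
    (measurable_latentDensity hΛ₁ hΛ₂).aemeasurable hcard
    (hP₀.trans_eq (ENNReal.ofReal_natCast _).symm)
  exact ⟨hkl, fun hlog => (EReal.sub_pos.mpr hlog).trans_le hkl⟩

end LatentModel

section BinaryEncoding

variable {α : Type*} [MeasurableSpace α] {Λ : α → ℝ}

/-- The encoding by a binary latent variable that is `true` with probability `Λ x` when `x` is
observed. -/
noncomputable def binaryEncoding (Λ : α → ℝ) (s : Bool) (x : α) : ℝ≥0∞ :=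
  ENNReal.ofReal (if s then Λ x else 1 - Λ x)

lemma isEncoding_binaryEncoding (hΛ : Measurable Λ) (hΛ01 : ∀ x, Λ x ∈ Set.Icc (0 : ℝ) 1) :
    IsEncoding (binaryEncoding Λ) where
  measurable s := by
    cases s
    · exact (hΛ.const_sub 1).ennreal_ofReal
    · exact hΛ.ennreal_ofReal
  sum_eq_one x := by
    simp [binaryEncoding, ← ENNReal.ofReal_add (hΛ01 x).1 (sub_nonneg.mpr (hΛ01 x).2)]

variable {μ : Measure α} [IsProbabilityMeasure μ]

lemma lintegral_binaryEncoding (hΛ : Measurable Λ) (hΛ01 : ∀ x, Λ x ∈ Set.Icc (0 : ℝ) 1)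
    (s : Bool) :
    ∫⁻ x, binaryEncoding Λ s x ∂μ =
      ENNReal.ofReal (if s then ∫ x, Λ x ∂μ else 1 - ∫ x, Λ x ∂μ) := by
  have hint : Integrable Λ μ := .of_mem_Icc 0 1 hΛ.aemeasurable (.of_forall hΛ01)
  cases s
  · have hone_sub : ∫ x, (1 - Λ x) ∂μ = 1 - ∫ x, Λ x ∂μ := by
      simp [integral_sub (integrable_const 1) hint]
    simp only [binaryEncoding, Bool.false_eq_true, ↓reduceIte, ← hone_sub]
    exact (ofReal_integral_eq_lintegral_ofReal ((integrable_const 1).sub hint)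
      (.of_forall fun x => sub_nonneg.mpr (hΛ01 x).2)).symm
  · exact (ofReal_integral_eq_lintegral_ofReal hint (.of_forall fun x => (hΛ01 x).1)).symm

lemma withDensity_condDensity_binaryEncoding (hΛ : Measurable Λ)
    (hΛ01 : ∀ x, Λ x ∈ Set.Icc (0 : ℝ) 1) (hpos : 0 < ∫ x, Λ x ∂μ) (hlt : ∫ x, Λ x ∂μ < 1)
    (s : Bool) :
    μ.withDensity (condDensity μ (binaryEncoding Λ s)) =
      if s then μ.withDensity (fun x => ENNReal.ofReal (Λ x / ∫ y, Λ y ∂μ))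
      else μ.withDensity (fun x => ENNReal.ofReal ((1 - Λ x) / (1 - ∫ y, Λ y ∂μ))) := by
  unfold condDensity
  rw [lintegral_binaryEncoding hΛ hΛ01]
  cases s <;>
    simp [binaryEncoding, ENNReal.ofReal_div_of_pos hpos,
      ENNReal.ofReal_div_of_pos (sub_pos.mpr hlt)]

lemma sum_ofReal_eq_lintegral_binaryEncoding {T : Type*} [Fintype T] {p : Bool → T → ℝ}
    (hΛ : Measurable Λ) (hΛ01 : ∀ x, Λ x ∈ Set.Icc (0 : ℝ) 1) (hp0 : ∀ s t, 0 ≤ p s t)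
    (hp1 : ∑ s, ∑ t, p s t = 1) (hp : ∑ t, p true t = ∫ x, Λ x ∂μ) (s : Bool) :
    ∑ t, ENNReal.ofReal (p s t) = ∫⁻ x, binaryEncoding Λ s x ∂μ := by
  rw [lintegral_binaryEncoding hΛ hΛ01, ← ENNReal.ofReal_sum_of_nonneg fun t _ => hp0 s t]
  congr 1
  rw [Fintype.sum_bool] at hp1
  cases s
  · exact eq_sub_of_add_eq' (hp ▸ hp1)
  · exact hp

end BinaryEncoding

/-- A latent binary pairwise model cannot gain more than `log 2` of KL divergence:
`KL(P₀ ‖ P) ≥ KL(P₀ ‖ μ₁ ⊗ μ₂) - log 2`, and if the mutual information of `P₀` exceeds `log 2`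
then `KL(P₀ ‖ P) > 0`. -/
theorem stmt_9 (P₀ : Measure (ℝ × ℝ)) [IsProbabilityMeasure P₀]
    (μ₁ μ₂ : Measure ℝ)
    (hμ₁ : μ₁ = P₀.map Prod.fst) (hμ₂ : μ₂ = P₀.map Prod.snd)
    (p : Bool → Bool → ℝ) (hp0 : ∀ s t, 0 ≤ p s t)
    (hp1 : ∑ s : Bool, ∑ t : Bool, p s t = 1)
    (p₁ p₂ : ℝ)
    (hp₁ : p₁ = p true true + p true false) (hp₂ : p₂ = p true true + p false true)
    (hp₁0 : 0 < p₁) (hp₁1 : p₁ < 1) (hp₂0 : 0 < p₂) (hp₂1 : p₂ < 1)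
    (Λ₁ Λ₂ : ℝ → ℝ) (hΛ₁m : Measurable Λ₁) (hΛ₂m : Measurable Λ₂)
    (hΛ₁b : ∀ x, Λ₁ x ∈ Set.Icc (0 : ℝ) 1) (hΛ₂b : ∀ x, Λ₂ x ∈ Set.Icc (0 : ℝ) 1)
    (hΛ₁ : ∫ x, Λ₁ x ∂μ₁ = p₁) (hΛ₂ : ∫ x, Λ₂ x ∂μ₂ = p₂)
    (ν₁ ν₂ : Bool → Measure ℝ)
    (hν₁ : ∀ s, ν₁ s = if s then μ₁.withDensity (fun x => ENNReal.ofReal (Λ₁ x / p₁))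
      else μ₁.withDensity (fun x => ENNReal.ofReal ((1 - Λ₁ x) / (1 - p₁))))
    (hν₂ : ∀ t, ν₂ t = if t then μ₂.withDensity (fun x => ENNReal.ofReal (Λ₂ x / p₂))
      else μ₂.withDensity (fun x => ENNReal.ofReal ((1 - Λ₂ x) / (1 - p₂))))
    (P : Measure (ℝ × ℝ))
    (hP : P = ∑ s : Bool, ∑ t : Bool, ENNReal.ofReal (p s t) • ((ν₁ s).prod (ν₂ t))) :
    klDiv P₀ (μ₁.prod μ₂) - ((Real.log 2 : ℝ) : EReal) ≤ klDiv P₀ P ∧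
      (((Real.log 2 : ℝ) : EReal) < klDiv P₀ (μ₁.prod μ₂) → 0 < klDiv P₀ P) := by
  obtain rfl : μ₁ = P₀.fst := hμ₁
  obtain rfl : μ₂ = P₀.snd := hμ₂
  subst hΛ₁ hΛ₂ hP
  have hp₁_sum := sum_ofReal_eq_lintegral_binaryEncoding hΛ₁m hΛ₁b hp0 hp1
    (by rw [hp₁, Fintype.sum_bool])
  have hp₂_sum := sum_ofReal_eq_lintegral_binaryEncoding hΛ₂m hΛ₂b (p := flip p)
    (fun t s => hp0 s t) (Finset.sum_comm.trans hp1) (by rw [hp₂, Fintype.sum_bool]; rfl)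
  have hgeneral := stmt_9_general P₀ (isEncoding_binaryEncoding hΛ₁m hΛ₁b)
    (isEncoding_binaryEncoding hΛ₂m hΛ₂b) hp₁_sum hp₂_sum
  simp only [latentModel, withDensity_condDensity_binaryEncoding hΛ₁m hΛ₁b hp₁0 hp₁1,
    withDensity_condDensity_binaryEncoding hΛ₂m hΛ₂b hp₂0 hp₂1, ← hν₁, ← hν₂] at hgeneral
  simpa only [Fintype.card_bool, min_self, Nat.cast_ofNat] using hgeneral
end

section
/- Let μ be an atomless probability measure on ℝ with cumulative distribution function F(x) = μ((-∞,x]) and let b ∈ [0,1]. Define ν_b = b·(2F)·μ + (1−b)·(2(1−F))·μ. Then ν_b is a probability measure and for every x ∈ ℝ, ν_b((-∞,x]) = ((2b−1)F(x) + 2(1−b))·F(x). -/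
open MeasureTheory

/-!
Let `Y` and `Z` be independent with law `μ`. Since `μ` has no atoms, `max Y Z` has density `2F` and
`min Y Z` has density `2(1 - F)` with respect to `μ`: the events `{Z ≤ Y}` and `{Y < Z}` contribute
equally to each density. So `ν_b` is the mixture of the laws of the maximum and the minimum, whose
cdfs are `F²` and `1 - (1 - F)²`.
-/

open Set

section Mixture

variable {Ω : Type*} [MeasurableSpace Ω]

lemma isProbabilityMeasure_ofReal_smul_add_ofReal_one_sub_smul (μ ν : Measure Ω)
    [IsProbabilityMeasure μ] [IsProbabilityMeasure ν] {b : ℝ} (hb : b ∈ Icc (0 : ℝ) 1) :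
    IsProbabilityMeasure (ENNReal.ofReal b • μ + ENNReal.ofReal (1 - b) • ν) where
  measure_univ := by
    simp [← ENNReal.ofReal_add hb.1 (sub_nonneg.2 hb.2)]

lemma measureReal_ofReal_smul_add_ofReal_smul_apply (μ ν : Measure Ω) [IsFiniteMeasure μ]
    [IsFiniteMeasure ν] {a b : ℝ} (ha : 0 ≤ a) (hb : 0 ≤ b) (s : Set Ω) :
    (ENNReal.ofReal a • μ + ENNReal.ofReal b • ν).real s = a * μ.real s + b * ν.real s := by
  have := μ.smul_finite (ENNReal.ofReal_ne_top (r := a))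
  have := ν.smul_finite (ENNReal.ofReal_ne_top (r := b))
  rw [measureReal_add_apply, measureReal_ennreal_smul_apply, measureReal_ennreal_smul_apply,
    ENNReal.toReal_ofReal ha, ENNReal.toReal_ofReal hb]

end Mixture

section MaxMin

variable {α : Type*} [LinearOrder α] [TopologicalSpace α] [OrderClosedTopology α]
  [SecondCountableTopology α] [MeasurableSpace α] [OpensMeasurableSpace α]

section TwoMeasures

variable (μ ν : Measure α) [SFinite ν]

lemma prod_setOf_snd_le_fst_inter_fst_preimage [SFinite μ] {s : Set α} (hs : MeasurableSet s) :
    μ.prod ν ({p | p.2 ≤ p.1} ∩ Prod.fst ⁻¹' s) = ∫⁻ t in s, ν (Iic t) ∂μ := by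
  rw [← Measure.restrict_apply' (measurable_fst hs), ← prod_univ,
    ← Measure.prod_restrict, Measure.restrict_univ,
    Measure.prod_apply (measurableSet_le measurable_snd measurable_fst)]
  rfl

lemma prod_setOf_fst_lt_snd_inter_snd_preimage [SFinite μ] {s : Set α} (hs : MeasurableSet s) :
    μ.prod ν ({p | p.1 < p.2} ∩ Prod.snd ⁻¹' s) = ∫⁻ t in s, μ (Iio t) ∂ν := by
  rw [← Measure.restrict_apply' (measurable_snd hs), ← univ_prod,
    ← Measure.prod_restrict, Measure.restrict_univ,
    Measure.prod_apply_symm (measurableSet_lt measurable_fst measurable_snd)]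
  rfl

lemma map_max_prod_eq_withDensity_add_withDensity [SFinite μ] :
    (μ.prod ν).map (fun p => max p.1 p.2) =
      μ.withDensity (fun t => ν (Iic t)) + ν.withDensity (fun t => μ (Iio t)) := by
  ext s hs
  have hle : MeasurableSet {p : α × α | p.2 ≤ p.1} := measurableSet_le measurable_snd measurable_fst
  have hmax_of_le : (fun p : α × α => max p.1 p.2) ⁻¹' s ∩ {p | p.2 ≤ p.1} =
      {p | p.2 ≤ p.1} ∩ Prod.fst ⁻¹' s := by
    grind
  have hmax_of_lt : (fun p : α × α => max p.1 p.2) ⁻¹' s \ {p | p.2 ≤ p.1} =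
      {p | p.1 < p.2} ∩ Prod.snd ⁻¹' s := by
    ext p
    grind
  rw [Measure.map_apply (by fun_prop) hs, ← measure_inter_add_sdiff _ hle, hmax_of_le, hmax_of_lt,
    prod_setOf_snd_le_fst_inter_fst_preimage μ ν hs,
    prod_setOf_fst_lt_snd_inter_snd_preimage μ ν hs, Measure.add_apply,
    withDensity_apply _ hs, withDensity_apply _ hs]

lemma map_max_prod_apply_Iic (x : α) :
    (μ.prod ν).map (fun p => max p.1 p.2) (Iic x) = μ (Iic x) * ν (Iic x) := by
  have hpre : (fun p : α × α => max p.1 p.2) ⁻¹' Iic x = Iic x ×ˢ Iic x := by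
    ext p
    simp only [mem_preimage, mem_Iic, max_le_iff, mem_prod]
  rw [Measure.map_apply (by fun_prop) measurableSet_Iic, hpre, Measure.prod_prod]

lemma map_min_prod_apply_Ioi (x : α) :
    (μ.prod ν).map (fun p => min p.1 p.2) (Ioi x) = μ (Ioi x) * ν (Ioi x) := by
  have hpre : (fun p : α × α => min p.1 p.2) ⁻¹' Ioi x = Ioi x ×ˢ Ioi x := by
    ext p
    simp only [mem_preimage, mem_Ioi, lt_min_iff, mem_prod]
  rw [Measure.map_apply (by fun_prop) measurableSet_Ioi, hpre, Measure.prod_prod]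

end TwoMeasures

section Atomless

variable (μ : Measure α) [NullSingletonClass μ]

lemma map_max_prod_self_eq_withDensity [SFinite μ] :
    (μ.prod μ).map (fun p => max p.1 p.2) = μ.withDensity (fun t => 2 * μ (Iic t)) := by
  have hmeas : Measurable fun t => μ (Iic t) :=
    measurable_measure_prodMk_left (measurableSet_le measurable_snd measurable_fst)
  rw [map_max_prod_eq_withDensity_add_withDensity, ← withDensity_add_left hmeas]
  congr with t
  rw [Pi.add_apply, measure_congr Iio_ae_eq_Iic, two_mul]

lemma map_min_prod_self_eq_withDensity [SFinite μ] :
    (μ.prod μ).map (fun p => min p.1 p.2) = μ.withDensity (fun t => 2 * μ (Ici t)) :=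
  have : SFinite (α := αᵒᵈ) μ := ‹_›
  have : NullSingletonClass (α := αᵒᵈ) μ := ‹_›
  map_max_prod_self_eq_withDensity (α := αᵒᵈ) μ

lemma withDensity_two_mul_measureReal_Iic [IsFiniteMeasure μ] :
    μ.withDensity (fun t => ENNReal.ofReal (2 * μ.real (Iic t))) =
      (μ.prod μ).map (fun p => max p.1 p.2) := by
  rw [map_max_prod_self_eq_withDensity]
  congr with t
  rw [ENNReal.ofReal_mul zero_le_two, ENNReal.ofReal_ofNat, ofReal_measureReal]

lemma withDensity_two_mul_one_sub_measureReal_Iic [IsProbabilityMeasure μ] :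
    μ.withDensity (fun t => ENNReal.ofReal (2 * (1 - μ.real (Iic t)))) =
      (μ.prod μ).map (fun p => min p.1 p.2) := by
  rw [map_min_prod_self_eq_withDensity]
  congr with t
  rw [← probReal_compl_eq_one_sub measurableSet_Iic, compl_Iic, ENNReal.ofReal_mul zero_le_two,
    ENNReal.ofReal_ofNat, ofReal_measureReal, measure_congr Ioi_ae_eq_Ici]

end Atomless

lemma map_max_prod_self_real_Iic (μ : Measure α) [SFinite μ] (x : α) :
    ((μ.prod μ).map (fun p => max p.1 p.2)).real (Iic x) = μ.real (Iic x) ^ 2 := by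
  rw [measureReal_def, map_max_prod_apply_Iic, ENNReal.toReal_mul, ← measureReal_def, sq]

lemma map_min_prod_self_real_Iic (μ : Measure α) [IsProbabilityMeasure μ] (x : α) :
    ((μ.prod μ).map (fun p => min p.1 p.2)).real (Iic x) = 1 - (1 - μ.real (Iic x)) ^ 2 := by
  have := Measure.isProbabilityMeasure_map (μ := μ.prod μ) (f := fun p => min p.1 p.2) (by fun_prop)
  rw [← compl_Ioi, probReal_compl_eq_one_sub measurableSet_Ioi,
    probReal_compl_eq_one_sub measurableSet_Ioi, sub_sub_cancel, measureReal_def,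
    map_min_prod_apply_Ioi, ENNReal.toReal_mul, ← measureReal_def, sq]

theorem stmt_13_general (μ : Measure α) [IsProbabilityMeasure μ] (hatomless : ∀ x : α, μ {x} = 0)
    (F : α → ℝ) (hF : ∀ x, F x = (μ (Iic x)).toReal) (b : ℝ) (hb : b ∈ Icc (0 : ℝ) 1)
    (ν : Measure α)
    (hν : ν = ENNReal.ofReal b • μ.withDensity (fun t => ENNReal.ofReal (2 * F t))
      + ENNReal.ofReal (1 - b) • μ.withDensity (fun t => ENNReal.ofReal (2 * (1 - F t)))) :
    IsProbabilityMeasure ν ∧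
      ∀ x : α, (ν (Iic x)).toReal = ((2 * b - 1) * F x + 2 * (1 - b)) * F x := by
  have : NullSingletonClass μ := ⟨hatomless⟩
  obtain rfl : F = fun x => μ.real (Iic x) := funext hF
  rw [withDensity_two_mul_measureReal_Iic,
    withDensity_two_mul_one_sub_measureReal_Iic] at hν
  subst hν
  have := Measure.isProbabilityMeasure_map (μ := μ.prod μ) (f := fun p => max p.1 p.2) (by fun_prop)
  have := Measure.isProbabilityMeasure_map (μ := μ.prod μ) (f := fun p => min p.1 p.2) (by fun_prop)
  refine ⟨isProbabilityMeasure_ofReal_smul_add_ofReal_one_sub_smul _ _ hb, fun x => ?_⟩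
  rw [← measureReal_def,
    measureReal_ofReal_smul_add_ofReal_smul_apply _ _ hb.1 (sub_nonneg.2 hb.2),
    map_max_prod_self_real_Iic, map_min_prod_self_real_Iic]
  ring

end MaxMin

/-- The Jeffrey-updated law for the cdf encoding: `ν_b = b·(2F)μ + (1-b)·(2(1-F))μ` is a
probability measure with cdf `((2b-1)F(x) + 2(1-b))·F(x)`. -/
theorem stmt_13 (μ : Measure ℝ) [IsProbabilityMeasure μ]
    (hatomless : ∀ x : ℝ, μ {x} = 0)
    (F : ℝ → ℝ) (hF : ∀ x, F x = (μ (Set.Iic x)).toReal)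
    (b : ℝ) (hb : b ∈ Set.Icc (0 : ℝ) 1)
    (ν : Measure ℝ)
    (hν : ν = ENNReal.ofReal b • μ.withDensity (fun t => ENNReal.ofReal (2 * F t))
      + ENNReal.ofReal (1 - b) • μ.withDensity (fun t => ENNReal.ofReal (2 * (1 - F t)))) :
    IsProbabilityMeasure ν ∧
      ∀ x : ℝ, (ν (Set.Iic x)).toReal = ((2 * b - 1) * F x + 2 * (1 - b)) * F x :=
  stmt_13_general μ hatomless F hF b hb ν hν
end

section
/- Let ψ : {0,1} × {0,1} → ℝ be strictly positive and let α_i, α_j ∈ (0,1). Define the maps U, V : [0,1] → [0,1] by U(v) = (ψ(0,0)α_j(1−v) + ψ(0,1)(1−α_j)v) / ((ψ(0,0)+ψ(1,0))α_j(1−v) + (ψ(0,1)+ψ(1,1))(1−α_j)v) and V(u) = (ψ(0,0)α_i(1−u) + ψ(1,0)(1−α_i)u) / ((ψ(0,0)+ψ(0,1))α_i(1−u) + (ψ(1,0)+ψ(1,1))(1−α_i)u). Then for any initial point (u₀, v₀) ∈ (0,1)², the sequences defined by u_{n+1} = U(v_n) and v_{n+1} = V(u_n) converge, and the limit (u*,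 v*) is the same for all initial points in (0,1)²; moreover (u*, v*) satisfies u* = U(v*) and v* = V(u*). -/
open Filter

/-! A message update multiplies the vector `(1 - x, x)` by a positive `2 × 2` matrix and normalizes
the result. In the log-odds coordinate `s`, where `x = sigmoid s`, such an update is a strict
contraction of `ℝ` (Birkhoff's contraction theorem in dimension two). Hence the paired update
contracts the log-odds plane, and Banach's fixed point theorem there is transported back to
`(0, 1)²` by the sigmoid. -/

open Function Real Topology
open scoped Matrix

theorem exists_isFixedPt_tendsto_iterate_of_semiconj {X Y : Type*} [MetricSpace X]
    [CompleteSpace X] [Nonempty X] [TopologicalSpace Y] {K : NNReal} {S : X → X} {T : Y → Y}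
    {φ : X → Y} (hS : ContractingWith K S) (hφ : Continuous φ) (h : Semiconj φ S T) :
    ∃ y, IsFixedPt T y ∧ ∀ x ∈ Set.range φ, Tendsto (fun n => T^[n] x) atTop (𝓝 y) := by
  refine ⟨φ (hS.fixedPoint S), hS.fixedPoint_isFixedPt.map h, ?_⟩
  rintro _ ⟨x, rfl⟩
  simpa only [comp_def, (h.iterate_right _).eq] using
    (hφ.tendsto _).comp (hS.tendsto_iterate_fixedPoint x)

theorem lipschitzWith_prodMk_swap {α β : Type*} [PseudoEMetricSpace α] [PseudoEMetricSpace β]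
    {K L : NNReal} {f : β → α} {g : α → β} (hf : LipschitzWith K f) (hg : LipschitzWith L g) :
    LipschitzWith (max K L) fun p : α × β => (f p.2, g p.1) := by
  simpa only [mul_one, comp_apply] using
    (hf.comp LipschitzWith.prod_snd).prodMk (hg.comp LipschitzWith.prod_fst)

theorem sigmoid_eq_exp_mul_one_sub_sigmoid (s : ℝ) : sigmoid s = exp s * (1 - sigmoid s) := by
  rw [← sigmoid_neg, ← sigmoid_mul_rexp_neg, mul_left_comm, ← exp_add, add_neg_cancel, exp_zero,
    mul_one]

theorem sigmoid_log_sub_log {p q : ℝ} (hp : 0 < p) (hq : 0 < q) :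
    sigmoid (log p - log q) = p / (p + q) := by
  rw [sigmoid_def, neg_sub, exp_sub, exp_log hp, exp_log hq]
  field_simp

theorem permanent_pos {n R : Type*} [Fintype n] [DecidableEq n] [CommSemiring R] [PartialOrder R]
    [IsStrictOrderedRing R] {A : Matrix n n R} (hA : ∀ i j, 0 < A i j) : 0 < A.permanent :=
  Finset.sum_pos (fun _ _ => Finset.prod_pos fun _ _ => hA _ _) Finset.univ_nonempty

theorem permanent_fin_two {R : Type*} [CommSemiring R] (A : Matrix (Fin 2) (Fin 2) R) :
    A.permanent = A 0 0 * A 1 1 + A 0 1 * A 1 0 := by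
  simp [Matrix.permanent, Finset.univ_perm_fin_succ, ← Finset.univ_product_univ,
    Fin.sum_univ_succ, Fin.prod_univ_succ, mul_comm (A 1 0)]

/-- The action of `A` on the projective line. The input `x` encodes the vector `(1 - x, x)`, but the
output is the *first* entry of the normalized image: dividing a belief `(α, 1 - α)` by a message
`(x, 1 - x)` gives a multiple of `(α * (1 - x), (1 - α) * x)`. -/
noncomputable def projectiveMap (A : Matrix (Fin 2) (Fin 2) ℝ) (x : ℝ) : ℝ :=
  (A 0 0 * (1 - x) + A 0 1 * x) /
    ((A 0 0 * (1 - x) + A 0 1 * x) + (A 1 0 * (1 - x) + A 1 1 * x))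

/-- `projectiveMap A` in the log-odds coordinate `s = log (x / (1 - x))`. -/
noncomputable def logOddsMap (A : Matrix (Fin 2) (Fin 2) ℝ) (s : ℝ) : ℝ :=
  log (A 0 0 + A 0 1 * exp s) - log (A 1 0 + A 1 1 * exp s)

/-- A Lipschitz constant for `logOddsMap A`. It is weaker than Birkhoff's optimal coefficient
`|√(bc) - √(ad)| / (√(bc) + √(ad))` for `A = !![a, b; c, d]`, but still less than `1`. -/
noncomputable def contractionCoeff (A : Matrix (Fin 2) (Fin 2) ℝ) : NNReal :=
  ‖A.det‖₊ / ‖A.permanent‖₊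

/-- The matrix of the message update through the factor `ψ`, whose second variable has belief
`(α, 1 - α)`. -/
def beliefWeighted (ψ : Matrix (Fin 2) (Fin 2) ℝ) (α : ℝ) : Matrix (Fin 2) (Fin 2) ℝ :=
  ψ * Matrix.diagonal ![α, 1 - α]

theorem beliefWeighted_pos {ψ : Matrix (Fin 2) (Fin 2) ℝ} (hψ : ∀ s t, 0 < ψ s t) {α : ℝ}
    (hα : α ∈ Set.Ioo (0 : ℝ) 1) (s t : Fin 2) : 0 < beliefWeighted ψ α s t := by
  rw [beliefWeighted, Matrix.mul_diagonal]
  refine mul_pos (hψ s t) ?_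
  fin_cases t
  exacts [hα.1, sub_pos.2 hα.2]

theorem projectiveMap_beliefWeighted (ψ : Matrix (Fin 2) (Fin 2) ℝ) (α x : ℝ) :
    projectiveMap (beliefWeighted ψ α) x =
      (ψ 0 0 * α * (1 - x) + ψ 0 1 * (1 - α) * x) /
        ((ψ 0 0 + ψ 1 0) * α * (1 - x) + (ψ 0 1 + ψ 1 1) * (1 - α) * x) := by
  simp only [projectiveMap, beliefWeighted, Matrix.mul_diagonal, Matrix.cons_val_zero,
    Matrix.cons_val_one]
  ring

section PositiveMatrix

variable {A B : Matrix (Fin 2) (Fin 2) ℝ}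

theorem add_mul_exp_pos (hA : ∀ i j, 0 < A i j) (s : ℝ) (i : Fin 2) :
    0 < A i 0 + A i 1 * exp s :=
  add_pos (hA i 0) (mul_pos (hA i 1) (exp_pos s))

theorem semiconj_sigmoid_logOddsMap (hA : ∀ i j, 0 < A i j) :
    Semiconj sigmoid (logOddsMap A) (projectiveMap A) := by
  intro s
  have factor (i : Fin 2) : A i 0 * (1 - sigmoid s) + A i 1 * sigmoid s =
      (A i 0 + A i 1 * exp s) * (1 - sigmoid s) := by
    linear_combination A i 1 * sigmoid_eq_exp_mul_one_sub_sigmoid s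
  have one_sub_ne : 1 - sigmoid s ≠ 0 := (sub_pos.2 (sigmoid_lt_one s)).ne'
  rw [logOddsMap, sigmoid_log_sub_log (add_mul_exp_pos hA s 0) (add_mul_exp_pos hA s 1),
    projectiveMap, factor, factor, ← add_mul, mul_div_mul_right _ _ one_sub_ne]

theorem hasDerivAt_logOddsMap (hA : ∀ i j, 0 < A i j) (s : ℝ) :
    HasDerivAt (logOddsMap A)
      (-(A.det * exp s) / ((A 0 0 + A 0 1 * exp s) * (A 1 0 + A 1 1 * exp s))) s := by
  have row_ne (i : Fin 2) := (add_mul_exp_pos hA s i).ne'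
  have log_row (i : Fin 2) := (((hasDerivAt_exp s).const_mul (A i 1)).const_add (A i 0)).log
    (row_ne i)
  refine ((log_row 0).sub (log_row 1)).congr_deriv ?_
  rw [div_sub_div _ _ (row_ne 0) (row_ne 1), Matrix.det_fin_two]
  ring

theorem contractionCoeff_lt_one (hA : ∀ i j, 0 < A i j) : contractionCoeff A < 1 := by
  have hperm := permanent_pos hA
  have hmain := mul_pos (hA 0 0) (hA 1 1)
  have hanti := mul_pos (hA 0 1) (hA 1 0)
  rw [contractionCoeff, div_lt_one (nnnorm_pos.2 hperm.ne'), ← NNReal.coe_lt_coe, coe_nnnorm,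
    coe_nnnorm, norm_eq_abs, norm_of_nonneg hperm.le, abs_lt, permanent_fin_two,
    Matrix.det_fin_two]
  constructor <;> linarith

theorem lipschitzWith_logOddsMap (hA : ∀ i j, 0 < A i j) :
    LipschitzWith (contractionCoeff A) (logOddsMap A) := by
  refine lipschitzWith_of_nnnorm_deriv_le
    (fun s => (hasDerivAt_logOddsMap hA s).differentiableAt) fun s => ?_
  have hden := mul_pos (add_mul_exp_pos hA s 0) (add_mul_exp_pos hA s 1)
  have permanent_mul_exp_le :
      A.permanent * exp s ≤ (A 0 0 + A 0 1 * exp s) * (A 1 0 + A 1 1 * exp s) := by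
    rw [permanent_fin_two]
    linarith [mul_pos (hA 0 0) (hA 1 0),
      mul_pos (mul_pos (hA 0 1) (exp_pos s)) (mul_pos (hA 1 1) (exp_pos s))]
  rw [← NNReal.coe_le_coe, (hasDerivAt_logOddsMap hA s).deriv, contractionCoeff, NNReal.coe_div]
  simp only [coe_nnnorm, norm_div, norm_neg, norm_mul, norm_of_nonneg (permanent_pos hA).le,
    norm_of_nonneg (exp_pos s).le, norm_of_nonneg (add_mul_exp_pos hA s _).le]
  rw [div_le_div_iff₀ hden (permanent_pos hA), mul_assoc, mul_comm (exp s)]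
  exact mul_le_mul_of_nonneg_left permanent_mul_exp_le (norm_nonneg _)

theorem exists_isFixedPt_tendsto_iterate_projectiveMap (hA : ∀ i j, 0 < A i j)
    (hB : ∀ i j, 0 < B i j) :
    ∃ q : ℝ × ℝ, IsFixedPt (fun p : ℝ × ℝ => (projectiveMap A p.2, projectiveMap B p.1)) q ∧
      ∀ p ∈ Set.Ioo (0 : ℝ) 1 ×ˢ Set.Ioo (0 : ℝ) 1,
        Tendsto (fun n => (fun p : ℝ × ℝ => (projectiveMap A p.2, projectiveMap B p.1))^[n] p)
          atTop (𝓝 q) := by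
  have hcontr : ContractingWith (max (contractionCoeff A) (contractionCoeff B))
      fun p : ℝ × ℝ => (logOddsMap A p.2, logOddsMap B p.1) :=
    ⟨max_lt (contractionCoeff_lt_one hA) (contractionCoeff_lt_one hB),
      lipschitzWith_prodMk_swap (lipschitzWith_logOddsMap hA) (lipschitzWith_logOddsMap hB)⟩
  have hsemi : Semiconj (Prod.map sigmoid sigmoid)
      (fun p : ℝ × ℝ => (logOddsMap A p.2, logOddsMap B p.1))
      (fun p : ℝ × ℝ => (projectiveMap A p.2, projectiveMap B p.1)) := fun p =>
    Prod.ext (semiconj_sigmoid_logOddsMap hA p.2) (semiconj_sigmoid_logOddsMap hB p.1)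
  rw [← range_sigmoid, ← Set.range_prodMap]
  exact exists_isFixedPt_tendsto_iterate_of_semiconj hcontr
    (continuous_sigmoid.prodMap continuous_sigmoid) hsemi

end PositiveMatrix

/-- Convergence of the mirror-BP message recursion on a single pairwise factor `ψ` with two
imposed beliefs `α_i, α_j`: the alternating iterates `u_{n+1} = U(v_n)`, `v_{n+1} = V(u_n)`
converge to a limit independent of the initial point in `(0,1)²`, and the limit is the unique
fixed point of the update. -/
theorem stmt_14 (ψ : Fin 2 → Fin 2 → ℝ) (hψ : ∀ s t, 0 < ψ s t)
    (αi αj : ℝ) (hαi : αi ∈ Set.Ioo (0 : ℝ) 1) (hαj : αj ∈ Set.Ioo (0 : ℝ) 1)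
    (U V : ℝ → ℝ)
    (hU : ∀ v, U v = (ψ 0 0 * αj * (1 - v) + ψ 0 1 * (1 - αj) * v) /
      ((ψ 0 0 + ψ 1 0) * αj * (1 - v) + (ψ 0 1 + ψ 1 1) * (1 - αj) * v))
    (hV : ∀ u, V u = (ψ 0 0 * αi * (1 - u) + ψ 1 0 * (1 - αi) * u) /
      ((ψ 0 0 + ψ 0 1) * αi * (1 - u) + (ψ 1 0 + ψ 1 1) * (1 - αi) * u)) :
    ∃ ustar vstar : ℝ, ustar = U vstar ∧ vstar = V ustar ∧
      ∀ u₀ v₀ : ℝ, u₀ ∈ Set.Ioo (0 : ℝ) 1 → v₀ ∈ Set.Ioo (0 : ℝ) 1 →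
        Tendsto (fun n => ((fun p : ℝ × ℝ => (U p.2, V p.1))^[n] (u₀, v₀)).1)
            atTop (nhds ustar) ∧
          Tendsto (fun n => ((fun p : ℝ × ℝ => (U p.2, V p.1))^[n] (u₀, v₀)).2)
            atTop (nhds vstar) := by
  obtain rfl : U = projectiveMap (beliefWeighted ψ αj) :=
    funext fun v => (hU v).trans (projectiveMap_beliefWeighted ψ αj v).symm
  obtain rfl : V = projectiveMap (beliefWeighted ψᵀ αi) :=
    funext fun u => (hV u).trans (projectiveMap_beliefWeighted ψᵀ αi u).symm
  obtain ⟨q, hfix, hlim⟩ := exists_isFixedPt_tendsto_iterate_projectiveMap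
    (beliefWeighted_pos hψ hαj) (beliefWeighted_pos (fun s t => hψ t s) hαi)
  refine ⟨q.1, q.2, (congrArg Prod.fst hfix).symm, (congrArg Prod.snd hfix).symm,
    fun u₀ v₀ hu₀ hv₀ => ?_⟩
  have hq := hlim (u₀, v₀) ⟨hu₀, hv₀⟩
  exact ⟨(continuous_fst.tendsto q).comp hq, (continuous_snd.tendsto q).comp hq⟩
end

section
/- Let a, b, c, d be real numbers such that the Möbius function f(x) = (a·x + b)/(c·x + d) has nonvanishing denominator c·x + d ≠ 0 for all x ∈ [0,1], maps [0,1] into [0,1], is monotone nondecreasing on [0,1], and satisfies f(0) > 0 and f(1) < 1. Then f has exactly one fixed point x* in [0,1], and for every x₀ ∈ [0,1] the sequence of iterates x_{n+1} = f(x_n) converges to x*. -/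
open Filter

/-!
Multiplying `f x = x` by the denominator `D x = c * x + d` turns fixed points into roots of
`Q x = (x - f x) * D x`, a polynomial of degree at most two. Since `D` keeps its sign, `Q` takes
values of opposite signs at the two endpoints, so it cannot have two roots in between. The orbits
of the endpoints are monotone, hence converge to fixed points, which therefore coincide, and every
other orbit is squeezed between these two.
-/

section Dynamics

open Function Set

theorem exists_isFixedPt_forall_tendsto_iterate_of_monotone {X : Type*} [CompleteLattice X]
    [TopologicalSpace X] [OrderTopology X] [T2Space X] [SupConvergenceClass X]
    [InfConvergenceClass X] {f : X → X} (hmono : Monotone f) (hcont : Continuous f)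
    (huniq : (fixedPoints f).Subsingleton) :
    ∃ p, IsFixedPt f p ∧ ∀ x, Tendsto (fun n => f^[n] x) atTop (nhds p) := by
  have hbot := tendsto_atTop_iSup (hmono.monotone_iterate_of_le_map (bot_le : ⊥ ≤ f ⊥))
  have htop := tendsto_atTop_iInf (hmono.antitone_iterate_of_map_le (le_top : f ⊤ ≤ ⊤))
  have hbot_fixed := isFixedPt_of_tendsto_iterate hbot hcont.continuousAt
  have htop_fixed := isFixedPt_of_tendsto_iterate htop hcont.continuousAt
  rw [huniq htop_fixed hbot_fixed] at htop
  exact ⟨_, hbot_fixed, fun x => tendsto_of_tendsto_of_tendsto_of_le_of_le hbot htop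
    (fun n => hmono.iterate n bot_le) (fun n => hmono.iterate n le_top)⟩

theorem mapsTo_Icc_of_monotoneOn {X : Type*} [Preorder X] {f : X → X} {u v : X}
    (hmono : MonotoneOn f (Icc u v)) (hu : u ≤ f u) (hv : f v ≤ v) :
    MapsTo f (Icc u v) (Icc u v) := by
  intro x hx
  have huv : u ≤ v := hx.1.trans hx.2
  exact ⟨hu.trans (hmono (left_mem_Icc.mpr huv) hx hx.1),
    (hmono hx (right_mem_Icc.mpr huv) hx.2).trans hv⟩

theorem exists_isFixedPt_forall_tendsto_iterate_of_monotoneOn_Icc {X : Type*}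
    [ConditionallyCompleteLinearOrder X] [TopologicalSpace X] [OrderTopology X] {f : X → X}
    {u v : X} (huv : u ≤ v) (hmono : MonotoneOn f (Icc u v)) (hcont : ContinuousOn f (Icc u v))
    (hu : u ≤ f u) (hv : f v ≤ v) (huniq : (Icc u v ∩ fixedPoints f).Subsingleton) :
    ∃ p ∈ Icc u v, IsFixedPt f p ∧
      ∀ x ∈ Icc u v, Tendsto (fun n => f^[n] x) atTop (nhds p) := by
  have : Fact (u ≤ v) := ⟨huv⟩
  have hmaps := mapsTo_Icc_of_monotoneOn hmono hu hv
  have huniq_restrict : (fixedPoints (hmaps.restrict f _ _)).Subsingleton := fun x hx y hy =>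
    Subtype.ext (huniq ⟨x.2, congrArg Subtype.val hx⟩ ⟨y.2, congrArg Subtype.val hy⟩)
  obtain ⟨p, hp, hlim⟩ := exists_isFixedPt_forall_tendsto_iterate_of_monotone
    (fun x y hxy => hmono x.2 y.2 hxy) (hcont.mapsToRestrict hmaps) huniq_restrict
  refine ⟨p, p.2, congrArg Subtype.val hp, fun x hx => ?_⟩
  simpa only [MapsTo.coe_iterate_restrict] using tendsto_subtype_rng.mp (hlim ⟨x, hx⟩)

end Dynamics

theorem mul_pos_of_isPreconnected_of_ne_zero {X R : Type*} [TopologicalSpace X] [Ring R]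
    [LinearOrder R] [IsStrictOrderedRing R] [TopologicalSpace R] [OrderClosedTopology R]
    {s : Set X} {g : X → R} (hs : IsPreconnected s) (hcont : ContinuousOn g s)
    (hne : ∀ x ∈ s, g x ≠ 0) {x y : X} (hx : x ∈ s) (hy : y ∈ s) : 0 < g x * g y := by
  have no_sign_change {x y : X} (hx : x ∈ s) (hy : y ∈ s) (hgx : g x < 0) : ¬ 0 < g y := by
    intro hgy
    obtain ⟨z, hz, hgz⟩ := hs.intermediate_value hx hy hcont ⟨hgx.le, hgy.le⟩
    exact hne z hz hgz
  rcases (hne x hx).lt_or_gt with hgx | hgx <;> rcases (hne y hy).lt_or_gt with hgy | hgy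
  · exact mul_pos_of_neg_of_neg hgx hgy
  · exact (no_sign_change hx hy hgx hgy).elim
  · exact (no_sign_change hy hx hgy hgx).elim
  · exact mul_pos hgx hgy

theorem quadratic_eq_mul_sub_mul_sub {R : Type*} [CommRing R] [NoZeroDivisors R]
    {p q r y z : R} (hyz : y ≠ z) (hy : p * y ^ 2 + q * y + r = 0)
    (hz : p * z ^ 2 + q * z + r = 0) (x : R) :
    p * x ^ 2 + q * x + r = p * ((x - y) * (x - z)) := by
  have hq : p * (y + z) + q = 0 :=
    mul_left_cancel₀ (sub_ne_zero.mpr hyz) (by linear_combination hy - hz)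
  linear_combination hy + (x - y) * hq

theorem quadratic_roots_Icc_subsingleton {R : Type*} [CommRing R] [LinearOrder R]
    [IsStrictOrderedRing R] {p q r u v : R}
    (hsign : (p * u ^ 2 + q * u + r) * (p * v ^ 2 + q * v + r) < 0) :
    {x ∈ Set.Icc u v | p * x ^ 2 + q * x + r = 0}.Subsingleton := by
  rintro y ⟨⟨huy, hyv⟩, hy⟩ z ⟨⟨huz, hzv⟩, hz⟩
  by_contra hyz
  refine hsign.not_ge ?_
  calc 0 ≤ p ^ 2 * (((y - u) * (z - u)) * ((v - y) * (v - z))) :=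
        mul_nonneg (sq_nonneg p) (mul_nonneg
          (mul_nonneg (sub_nonneg.mpr huy) (sub_nonneg.mpr huz))
          (mul_nonneg (sub_nonneg.mpr hyv) (sub_nonneg.mpr hzv)))
    _ = (p * u ^ 2 + q * u + r) * (p * v ^ 2 + q * v + r) := by
        rw [quadratic_eq_mul_sub_mul_sub hyz hy hz u, quadratic_eq_mul_sub_mul_sub hyz hy hz v]
        ring

/-- The Möbius function with coefficient matrix `!![a, b; c, d]`, which may be singular. At a zero
of the denominator it takes the value `0`. -/
def mobius {K : Type*} [Field K] (a b c d x : K) : K := (a * x + b) / (c * x + d)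

theorem sub_mobius_mul_denom {K : Type*} [Field K] (a b : K) {c d x : K} (hx : c * x + d ≠ 0) :
    (x - mobius a b c d x) * (c * x + d) = c * x ^ 2 + (d - a) * x + -b := by
  rw [mobius, sub_mul, div_mul_cancel₀ _ hx]
  ring

theorem continuousOn_mobius {K : Type*} [Field K] [TopologicalSpace K]
    [IsTopologicalDivisionRing K] (a b : K) {c d : K} {s : Set K} (hden : ∀ x ∈ s, c * x + d ≠ 0) :
    ContinuousOn (mobius a b c d) s :=
  ContinuousOn.div (by fun_prop) (by fun_prop) hden

theorem mobius_fixedPoints_Icc_subsingleton {a b c d u v : ℝ} (huv : u ≤ v)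
    (hden : ∀ x ∈ Set.Icc u v, c * x + d ≠ 0) (hu : u < mobius a b c d u)
    (hv : mobius a b c d v < v) :
    (Set.Icc u v ∩ Function.fixedPoints (mobius a b c d)).Subsingleton := by
  have hu_mem : u ∈ Set.Icc u v := Set.left_mem_Icc.mpr huv
  have hv_mem : v ∈ Set.Icc u v := Set.right_mem_Icc.mpr huv
  have hden_sign : 0 < (c * u + d) * (c * v + d) :=
    mul_pos_of_isPreconnected_of_ne_zero isPreconnected_Icc (by fun_prop) hden hu_mem hv_mem
  have hsign : (c * u ^ 2 + (d - a) * u + -b) * (c * v ^ 2 + (d - a) * v + -b) < 0 := by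
    rw [← sub_mobius_mul_denom a b (hden u hu_mem), ← sub_mobius_mul_denom a b (hden v hv_mem),
      mul_mul_mul_comm]
    exact mul_neg_of_neg_of_pos (mul_neg_of_neg_of_pos (sub_neg.mpr hu) (sub_pos.mpr hv)) hden_sign
  refine (quadratic_roots_Icc_subsingleton hsign).anti fun x ⟨hx, hfx⟩ => ⟨hx, ?_⟩
  rw [← sub_mobius_mul_denom a b (hden x hx), hfx.eq, sub_self, zero_mul]

theorem stmt_15_general {a b c d u v : ℝ} (huv : u ≤ v)
    (hden : ∀ x ∈ Set.Icc u v, c * x + d ≠ 0)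
    (hmono : MonotoneOn (mobius a b c d) (Set.Icc u v))
    (hu : u < mobius a b c d u) (hv : mobius a b c d v < v) :
    ∃ xstar ∈ Set.Icc u v, mobius a b c d xstar = xstar ∧
      (∀ y ∈ Set.Icc u v, mobius a b c d y = y → y = xstar) ∧
      ∀ x₀ ∈ Set.Icc u v, Tendsto (fun n => (mobius a b c d)^[n] x₀) atTop (nhds xstar) := by
  have huniq := mobius_fixedPoints_Icc_subsingleton huv hden hu hv
  obtain ⟨p, hp, hfp, hlim⟩ := exists_isFixedPt_forall_tendsto_iterate_of_monotoneOn_Icc huv hmono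
    (continuousOn_mobius a b hden) hu.le hv.le huniq
  exact ⟨p, hp, hfp, fun y hy hfy => huniq ⟨hy, hfy⟩ ⟨hp, hfp⟩, hlim⟩

/-- A monotone nondecreasing Möbius self-map of `[0,1]` with `f(0) > 0` and `f(1) < 1` has a
unique fixed point in `[0,1]`, to which all iterate sequences started in `[0,1]` converge. -/
theorem stmt_15 (a b c d : ℝ) (f : ℝ → ℝ) (hf : ∀ x, f x = (a * x + b) / (c * x + d))
    (hden : ∀ x ∈ Set.Icc (0 : ℝ) 1, c * x + d ≠ 0)
    (hmaps : Set.MapsTo f (Set.Icc (0 : ℝ) 1) (Set.Icc (0 : ℝ) 1))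
    (hmono : MonotoneOn f (Set.Icc (0 : ℝ) 1))
    (h0 : 0 < f 0) (h1 : f 1 < 1) :
    ∃ xstar ∈ Set.Icc (0 : ℝ) 1, f xstar = xstar ∧
      (∀ y ∈ Set.Icc (0 : ℝ) 1, f y = y → y = xstar) ∧
      ∀ x₀ ∈ Set.Icc (0 : ℝ) 1, Tendsto (fun n => f^[n] x₀) atTop (nhds xstar) := by
  obtain rfl : f = mobius a b c d := funext hf
  exact stmt_15_general zero_le_one hden hmono h0 h1
end
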